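/- Every 4 × 4 matrix M : Fin 4 → Fin 4 → ℕ satisfying the warping-matrix rules for c = 2 is equivalent, up to a permutation of rows, a cyclic permutation of columns, and possibly reversing the cyclic order of columns, to the matrix with rows (0, 1, 2, 1), (1, 0, 1, 0), (1, 2, 1, 2), (2, 1, 0, 1). -/

import Mathlib

namespace Warping

/-- The cyclic successor of an index. -/
def next {n : ℕ} (b : Fin n) : Fin n :=
  ⟨((b : ℕ) + 1) % n, Nat.mod_lt _ (Nat.lt_of_le_of_lt (Nat.zero_le _) b.isLt)⟩

/-- Cyclic shift of the columns by `t`. -/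
def colShift (c : ℕ) (t : ℕ) (j : Fin (2*c)) : Fin (2*c) :=
  ⟨((j : ℕ) + t) % (2*c), Nat.mod_lt _ (Nat.lt_of_le_of_lt (Nat.zero_le _) j.isLt)⟩

/-- Reversal of the cyclic order of the columns (composed with a cyclic shift by `t`). -/
def colRev (c : ℕ) (t : ℕ) (j : Fin (2*c)) : Fin (2*c) :=
  ⟨(t + 2*c - (j : ℕ)) % (2*c), Nat.mod_lt _ (Nat.lt_of_le_of_lt (Nat.zero_le _) j.isLt)⟩

/-- A row of one of the alternating forms `(k, k+1, k, k+1, …, k+1)` or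
`(l, l-1, l, l-1, …, l-1)`. -/
def AltRow (c : ℕ) (r : Fin (2*c) → ℕ) : Prop :=
  (∃ k : ℕ, ∀ j : Fin (2*c), (r j : ℤ) = k + (j : ℕ) % 2) ∨
  (∃ l : ℕ, ∀ j : Fin (2*c), (r j : ℤ) = l - (j : ℕ) % 2)

/-- The warping-matrix rules (i)–(iv) for a `2^c × 2c` matrix:
(i) cyclically consecutive entries of every row differ by exactly one;
(ii) in each column the value `n` appears exactly `c.choose n` times;
(iii) there is a unique partition of the `2^c` rows into `2^(c-1)` disjoint pairs such that
the two rows of each pair sum entrywise to the constant row `(c, c, …, c)`;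
(iv) there are exactly two rows of the alternating forms `(k, k+1, k, k+1, …)` and
`(l, l-1, l, l-1, …)`, and for these `k + l = c`. -/
def WarpingRules (c : ℕ) (M : Fin (2^c) → Fin (2*c) → ℕ) : Prop :=
  (∀ i j, |(M i (next j) : ℤ) - (M i j : ℤ)| = 1) ∧
  (∀ j : Fin (2*c), ∀ n : ℕ, n ≤ c →
      (Finset.univ.filter (fun i => M i j = n)).card = Nat.choose c n) ∧
  (∃! P : Finset (Finset (Fin (2^c))),
      P.card = 2^(c-1) ∧ (∀ p ∈ P, p.card = 2) ∧
      (∀ i : Fin (2^c), ∃! p, p ∈ P ∧ i ∈ p) ∧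
      (∀ p ∈ P, ∀ i ∈ p, ∀ i' ∈ p, i ≠ i' → ∀ j, M i j + M i' j = c)) ∧
  (∃ i₀ i₁ : Fin (2^c), ∃ k l : ℕ, i₀ ≠ i₁ ∧ k + l = c ∧
      (∀ j : Fin (2*c), (M i₀ j : ℤ) = k + (j : ℕ) % 2) ∧
      (∀ j : Fin (2*c), (M i₁ j : ℤ) = l - (j : ℕ) % 2) ∧
      (∀ i, AltRow c (M i) → i = i₀ ∨ i = i₁))

/-- Equivalence of `2^c × 2c` matrices up to a permutation of rows, a cyclic permutation of
columns, and possibly reversing the cyclic order of the columns. -/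
def MatEquiv (c : ℕ) (M N : Fin (2^c) → Fin (2*c) → ℕ) : Prop :=
  ∃ σ : Equiv.Perm (Fin (2^c)), ∃ t : ℕ,
    (∀ i j, M i j = N (σ i) (colShift c t j)) ∨ (∀ i j, M i j = N (σ i) (colRev c t j))

/-!
Since `1 + 2 + 1 = 4`, the prescribed counts leave no room for entries above `2`, so each column
consists of `0, 1, 1, 2`; its sum is `4` and its sum of squares is `6`. The two alternating rows,
one with entries in `{0, 1}` and the other in `{1, 2}`, add up to `(2, 2, 2, 2)`, hence so do the
other two rows `r` and `s`; moreover `r` equals `1` exactly where the alternating rows are `0` and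
`2`, i.e. on the columns of one parity. If the two remaining entries of `r` agreed, `r` would be
alternating too, so they are `0` and `2` and `r` is a cyclic shift of `(0, 1, 2, 1)`. This shift
determines all four rows.
-/

/-- The counting rule (ii) for a single column `x`: each `n ≤ c` is attained exactly
`c.choose n` times. The rows are indexed by an arbitrary finite type, and values above `c` are
excluded only once there are `2 ^ c` rows. -/
def IsBinomial {ι : Type*} [Fintype ι] (c : ℕ) (x : ι → ℕ) : Prop :=
  ∀ n ≤ c, (Finset.univ.filter (fun i => x i = n)).card = c.choose n

namespace IsBinomial

variable {ι : Type*} [Fintype ι] {c : ℕ} {x : ι → ℕ}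

theorem le (hx : IsBinomial c x) (hι : Fintype.card ι = 2 ^ c) (i : ι) : x i ≤ c := by
  have hcard : (Finset.univ.filter (fun i => x i ∈ Finset.range (c + 1))).card
      = (Finset.univ : Finset ι).card := by
    rw [← Finset.sum_card_fiberwise_eq_card_filter, Finset.card_univ, hι, ← Nat.sum_range_choose]
    exact Finset.sum_congr rfl fun n hn => hx n (Finset.mem_range_succ_iff.1 hn)
  exact Finset.mem_range_succ_iff.1 (Finset.card_filter_eq_iff.1 hcard i (Finset.mem_univ i))

theorem sum_comp {R : Type*} [AddCommMonoid R] (hx : IsBinomial c x)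
    (hι : Fintype.card ι = 2 ^ c) (f : ℕ → R) :
    ∑ i, f (x i) = ∑ n ∈ Finset.range (c + 1), c.choose n • f n := by
  rw [← Finset.sum_fiberwise_of_maps_to' (g := x)
    (fun i _ => Finset.mem_range_succ_iff.2 (hx.le hι i)) f]
  refine Finset.sum_congr rfl fun n hn => ?_
  rw [Finset.sum_const, hx n (Finset.mem_range_succ_iff.1 hn)]

theorem sum_comp_four {R : Type*} [AddCommMonoid R] (hx : IsBinomial 2 x) (e : Fin 4 ≃ ι)
    (f : ℕ → R) :
    f (x (e 0)) + f (x (e 1)) + f (x (e 2)) + f (x (e 3)) = f 0 + 2 • f 1 + f 2 := by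
  rw [← Fin.sum_univ_four (fun a => f (x (e a))), e.sum_comp (fun i => f (x i)),
    hx.sum_comp (Fintype.card_congr e).symm]
  simp [Finset.sum_range_succ]

theorem complement_of_add_eq_two (hx : IsBinomial 2 x) (e : Fin 4 ≃ ι)
    (h : x (e 1) + x (e 2) = 2) :
    x (e 0) + x (e 3) = 2 ∧ (x (e 0) = 1 ↔ x (e 1) ≠ 1) := by
  have sum_eq : x (e 0) + x (e 1) + x (e 2) + x (e 3) = 4 := hx.sum_comp_four e id
  have sum_sq_eq : x (e 0) ^ 2 + x (e 1) ^ 2 + x (e 2) ^ 2 + x (e 3) ^ 2 = 6 :=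
    hx.sum_comp_four e (· ^ 2)
  have h₀₃ : x (e 0) + x (e 3) = 2 := by omega
  refine ⟨h₀₃, ?_⟩
  have h₂ : x (e 2) = 2 - x (e 1) := by omega
  have h₃ : x (e 3) = 2 - x (e 0) := by omega
  have h₀ : x (e 0) ≤ 2 := by omega
  have h₁ : x (e 1) ≤ 2 := by omega
  rw [h₂, h₃] at sum_sq_eq
  interval_cases x (e 0) <;> interval_cases x (e 1) <;> simp_all

end IsBinomial

theorem altRow_two_of_periodic {r : Fin (2 * 2) → ℕ} (h₀₂ : r 0 = r 2) (h₁₃ : r 1 = r 3)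
    (hstep : r 1 = r 0 + 1 ∨ r 0 = r 1 + 1) : AltRow 2 r := by
  refine hstep.imp (fun h => ⟨r 0, fun j => ?_⟩) fun h => ⟨r 0, fun j => ?_⟩ <;>
    fin_cases j <;> simp [← h₀₂, ← h₁₃, h]

theorem exists_eq_shift_of_not_altRow {r : Fin (2 * 2) → ℕ} (hle : ∀ j, r j ≤ 2)
    (hstep : ∀ j, |(r (next j) : ℤ) - r j| = 1) (hr : ¬ AltRow 2 r) :
    ∃ t, ∀ j, r j = ![0, 1, 2, 1] (colShift 2 t j) := by
  have hstep' (j) : r (next j) = r j + 1 ∨ r j = r (next j) + 1 := by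
    have := (abs_eq zero_le_one).1 (hstep j)
    omega
  obtain ⟨h₀₁, h₁₂, h₂₃, h₃₀⟩ :
      (r 1 = r 0 + 1 ∨ r 0 = r 1 + 1) ∧ (r 2 = r 1 + 1 ∨ r 1 = r 2 + 1) ∧
      (r 3 = r 2 + 1 ∨ r 2 = r 3 + 1) ∧ (r 0 = r 3 + 1 ∨ r 3 = r 0 + 1) :=
    ⟨hstep' 0, hstep' 1, hstep' 2, hstep' 3⟩
  have hbound : r 0 ≤ 2 ∧ r 1 ≤ 2 ∧ r 2 ≤ 2 ∧ r 3 ≤ 2 := ⟨hle 0, hle 1, hle 2, hle 3⟩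
  have hne : r 0 ≠ r 2 ∨ r 1 ≠ r 3 := by
    by_contra! h
    exact hr (altRow_two_of_periodic h.1 h.2 h₀₁)
  have hrot : (r 0 = 0 ∧ r 1 = 1 ∧ r 2 = 2 ∧ r 3 = 1) ∨ (r 0 = 1 ∧ r 1 = 2 ∧ r 2 = 1 ∧ r 3 = 0) ∨
      (r 0 = 2 ∧ r 1 = 1 ∧ r 2 = 0 ∧ r 3 = 1) ∨ (r 0 = 1 ∧ r 1 = 0 ∧ r 2 = 1 ∧ r 3 = 2) := by
    omega
  rcases hrot with h | h | h | h
  · exact ⟨0, fun j => by fin_cases j <;> simp [colShift, h]⟩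
  · exact ⟨1, fun j => by fin_cases j <;> simp [colShift, h]⟩
  · exact ⟨2, fun j => by fin_cases j <;> simp [colShift, h]⟩
  · exact ⟨3, fun j => by fin_cases j <;> simp [colShift, h]⟩

theorem column_eq_of_row_zero_eq {x : Fin 4 → ℕ} {q : Fin 4} (h₀ : x 0 = ![0, 1, 2, 1] q)
    (h₀₃ : x 0 + x 3 = 2) (h₁₂ : x 1 + x 2 = 2) (h₁ : x 1 ≤ 1) (hone : x 0 = 1 ↔ x 1 ≠ 1)
    (a : Fin 4) :
    x a = ![![0, 1, 2, 1], ![1, 0, 1, 0], ![1, 2, 1, 2], ![2, 1, 0, 1]] a q := by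
  fin_cases q <;> fin_cases a <;> simp_all <;> omega

theorem exists_perm_shift_of_parity_row {M : Fin (2 ^ 2) → Fin (2 * 2) → ℕ} {u v : Fin (2 ^ 2)}
    {m : ℕ} (hcol : ∀ j, IsBinomial 2 (M · j)) (huv : u ≠ v)
    (hu : ∀ j, M u j = ((j : ℕ) + m) % 2) (hadd : ∀ j, M u j + M v j = 2)
    (halt : ∀ i, AltRow 2 (M i) → i = u ∨ i = v) :
    ∃ σ : Equiv.Perm (Fin (2 ^ 2)), ∃ t, ∀ i j,
      M i j =
        ![![0, 1, 2, 1], ![1, 0, 1, 0], ![1, 2, 1, 2], ![2, 1, 0, 1]] (σ i) (colShift 2 t j) := by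
  obtain ⟨e, rfl, rfl⟩ : ∃ e : Equiv.Perm (Fin 4), e 1 = u ∧ e 2 = v :=
    MulAction.is_two_pretransitive_iff.1 (Equiv.Perm.isMultiplyPretransitive (Fin 4) 2)
      (by decide) huv
  have hcompl j := (hcol j).complement_of_add_eq_two e (hadd j)
  have hnot : ¬ AltRow 2 (M (e 0)) := fun h => by simpa using halt _ h
  have hle j : M (e 0) j ≤ 2 := (hcol j).le (by simp) (e 0)
  have hstep j : |(M (e 0) (next j) : ℤ) - M (e 0) j| = 1 := by
    have hu_next : M (e 1) (next j) = ((j : ℕ) + 1 + m) % 2 := by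
      rw [hu]
      simp only [next]
      omega
    have := hu j
    have := hcompl j
    have := hcompl (next j)
    rw [abs_eq zero_le_one]
    omega
  obtain ⟨t, ht⟩ := exists_eq_shift_of_not_altRow hle hstep hnot
  refine ⟨e.symm, t, fun i j => ?_⟩
  have hu_le : M (e 1) j ≤ 1 := by rw [hu]; omega
  have := column_eq_of_row_zero_eq (x := fun a => M (e a) j) (ht j) (hcompl j).1 (hadd j)
    hu_le (hcompl j).2 (e.symm i)
  simpa using this

theorem warpingRules_two_general {M : Fin (2 ^ 2) → Fin (2 * 2) → ℕ} {i₀ i₁ : Fin (2 ^ 2)} {k l : ℕ}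
    (hcol : ∀ j, IsBinomial 2 (M · j)) (hne : i₀ ≠ i₁) (hkl : k + l = 2)
    (h₀ : ∀ j, (M i₀ j : ℤ) = k + (j : ℕ) % 2) (h₁ : ∀ j, (M i₁ j : ℤ) = l - (j : ℕ) % 2)
    (halt : ∀ i, AltRow 2 (M i) → i = i₀ ∨ i = i₁) :
    ∃ σ : Equiv.Perm (Fin (2 ^ 2)), ∃ t, ∀ i j,
      M i j =
        ![![0, 1, 2, 1], ![1, 0, 1, 0], ![1, 2, 1, 2], ![2, 1, 0, 1]] (σ i) (colShift 2 t j) := by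
  have hadd j : M i₀ j + M i₁ j = 2 := by have := h₀ j; have := h₁ j; omega
  have hl : 1 ≤ l := by
    have h : (M i₁ 1 : ℤ) = l - 1 := h₁ 1
    omega
  obtain rfl | rfl : k = 0 ∨ k = 1 := by omega
  · exact exists_perm_shift_of_parity_row (m := 0) hcol hne
      (fun j => by have := h₀ j; omega) hadd halt
  · exact exists_perm_shift_of_parity_row (m := 1) hcol hne.symm
      (fun j => by have := h₁ j; omega) (fun j => by rw [add_comm, hadd]) fun i h => (halt i h).symm

/-- Every `4 × 4` matrix satisfying the warping-matrix rules for `c = 2` is equivalent to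
the matrix with rows `(0,1,2,1)`, `(1,0,1,0)`, `(1,2,1,2)`, `(2,1,0,1)`. -/
theorem warpingRules_two (M : Fin (2^2) → Fin (2*2) → ℕ) (hM : WarpingRules 2 M) :
    MatEquiv 2 M ![![0,1,2,1], ![1,0,1,0], ![1,2,1,2], ![2,1,0,1]] := by
  obtain ⟨-, hcol, -, i₀, i₁, k, l, hne, hkl, h₀, h₁, halt⟩ := hM
  obtain ⟨σ, t, h⟩ := warpingRules_two_general hcol hne hkl h₀ h₁ halt
  exact ⟨σ, t, Or.inl h⟩

end Warping
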